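/- With D₁, D₂ and the matrices Γ^μ, Γ^{μ+d} as defined in the context, for every Schwartz function f ∈ 𝓢(ℝ^d) and every ψ ∈ 𝓢(ℝ^d, V) one has the commutator identities D₁(f ⋆ ψ) − f ⋆ (D₁ψ) = Σ_μ Γ^μ ((i ∂_μ f) ⋆ ψ) and D₂(f ⋆ ψ) − f ⋆ (D₂ψ) = Σ_μ Γ^{μ+d} ((i ∂_μ f) ⋆ ψ), where f ⋆ ψ denotes the componentwise Moyal product. -/

import Mathlib

/-!
The integral over `y` in the Moyal product is a Fourier transform: with
`(Φψ)(k) = ∫ e^{i⟨k,y⟩} ψ(y) dy` (`fourierPhi`), translation in `y` gives (`moyalV_eq`)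
`(f ⋆ ψ)(x) = (2π)^{-d} ∫ f(x + ½Θk) e^{-i⟨k,x⟩} (Φψ)(k) dk`.
Since `Φψ` is a Schwartz function, this integral converges absolutely, may be differentiated in `x`
under the integral sign, and may be integrated by parts in `k`.

Two identities follow. As `Φ(∂_μψ) = -i k_μ Φψ` (`fourierPhi_pderS`), differentiating in `x` gives
the Leibniz rule `∂_μ(f ⋆ ψ) = ∂_μf ⋆ ψ + f ⋆ ∂_μψ` (`pderV_moyalV`). As `∂_μΦψ = i Φ(x_μψ)`
(`fderiv_fourierPhi`), integrating by parts in `k` gives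
`f ⋆ (x_μψ) = x_μ (f ⋆ ψ) + ½ Σ_ν Θ_{νμ} (i∂_νf) ⋆ ψ` (`moyalL_coordMul`).
Hence `a_μ` and `a_μ†` commute with `f ⋆ ·` up to
`±∂_μf ⋆ ψ - ½ Ω̃ Σ_ν Θ_{νμ} (i∂_νf) ⋆ ψ`. Inserting this in `D₁` and `D₂` and collecting the
coefficient of each `(i∂_μf) ⋆ ψ` (`sum_theta_swap`) gives `Γ^μ` and `Γ^{μ+d}`.
-/

open MeasureTheory Real Matrix
open scoped InnerProductSpace

noncomputable section

/-- Euclidean dot product on `Fin d → ℝ`. -/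
def dotR {d : ℕ} (x y : Fin d → ℝ) : ℝ := ∑ i, x i * y i

variable {V : Type*} [NormedAddCommGroup V] [InnerProductSpace ℂ V]

/-- Componentwise Moyal product of a scalar function with a `V`-valued function. -/
def moyalV {d : ℕ} (Θ : Matrix (Fin d) (Fin d) ℝ) (f : (Fin d → ℝ) → ℂ)
    (ψ : (Fin d → ℝ) → V) (x : Fin d → ℝ) : V :=
  ((2 * π) ^ d : ℝ)⁻¹ •
    ∫ k : Fin d → ℝ, ∫ y : Fin d → ℝ,
      (f (x + (2 : ℝ)⁻¹ • Θ.mulVec k) * Complex.exp (Complex.I * (dotR k y : ℂ)))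
        • ψ (x + y)

/-- Partial derivative in the `μ`-th coordinate direction of a `V`-valued function. -/
def pderV {d : ℕ} (μ : Fin d) (ψ : (Fin d → ℝ) → V) (x : Fin d → ℝ) : V :=
  fderiv ℝ ψ x (Pi.single μ 1)

/-- The bosonic annihilation operator `a_μ ψ = ∂_μ ψ + Ω̃ x_μ ψ`. -/
def annOp {d : ℕ} (Ω : ℝ) (μ : Fin d) (ψ : (Fin d → ℝ) → V) (x : Fin d → ℝ) : V :=
  pderV μ ψ x + (Ω * x μ) • ψ x

/-- The bosonic creation operator `a_μ† ψ = −∂_μ ψ + Ω̃ x_μ ψ`. -/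
def creOp {d : ℕ} (Ω : ℝ) (μ : Fin d) (ψ : (Fin d → ℝ) → V) (x : Fin d → ℝ) : V :=
  -pderV μ ψ x + (Ω * x μ) • ψ x

/-- The Dirac-type operator `D₁ = Σ_μ (a_μ b_μ* + a_μ† b_μ)`. -/
def D1op {d : ℕ} (Ω : ℝ) (b bs : Fin d → V →L[ℂ] V)
    (ψ : (Fin d → ℝ) → V) (x : Fin d → ℝ) : V :=
  ∑ μ, (bs μ (annOp Ω μ ψ x) + b μ (creOp Ω μ ψ x))

/-- The Dirac-type operator `D₂ = Σ_μ (i a_μ b_μ − i a_μ† b_μ*)`. -/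
def D2op {d : ℕ} (Ω : ℝ) (b bs : Fin d → V →L[ℂ] V)
    (ψ : (Fin d → ℝ) → V) (x : Fin d → ℝ) : V :=
  ∑ μ, (Complex.I • b μ (annOp Ω μ ψ x) - Complex.I • bs μ (creOp Ω μ ψ x))

/-- The operators `Γ^μ := i(b_μ − b_μ*) − ½Ω̃ Σ_ν Θ_{μν}(b_ν + b_ν*)`. -/
def GammaA {d : ℕ} (Θ : Matrix (Fin d) (Fin d) ℝ) (Ω : ℝ)
    (b bs : Fin d → V →L[ℂ] V) (μ : Fin d) : V →L[ℂ] V :=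
  Complex.I • (b μ - bs μ) - ∑ ν, ((Ω / 2 * Θ μ ν : ℝ) : ℂ) • (b ν + bs ν)

/-- The operators `Γ^{μ+d} := (b_μ + b_μ*) − ½Ω̃ Σ_ν Θ_{μν} i(b_ν − b_ν*)`. -/
def GammaB {d : ℕ} (Θ : Matrix (Fin d) (Fin d) ℝ) (Ω : ℝ)
    (b bs : Fin d → V →L[ℂ] V) (μ : Fin d) : V →L[ℂ] V :=
  (b μ + bs μ) - ∑ ν, ((Ω / 2 * Θ μ ν : ℝ) : ℂ) • (Complex.I • (b ν - bs ν))

/-! ### The Fourier transform -/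

open SchwartzMap FourierTransform in
/-- The unnormalised Fourier transform `(Φψ)(k) = ∫ e^{i⟨k,y⟩} ψ(y) dy` on Schwartz functions. It is
obtained from Mathlib's transform on `EuclideanSpace` by rescaling the dual variable with
`-(2π)⁻¹`. -/
def fourierPhi (d : ℕ) (V : Type*) [NormedAddCommGroup V] [InnerProductSpace ℂ V] :
    SchwartzMap (Fin d → ℝ) V →L[ℂ] SchwartzMap (Fin d → ℝ) V :=
  (compCLMOfContinuousLinearEquiv ℂ
      ((PiLp.continuousLinearEquiv 2 ℝ (fun _ : Fin d => ℝ)).symm.trans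
        (ContinuousLinearEquiv.smulLeft
          (Units.mk0 (-(2 * π)⁻¹ : ℝ) (by simp [Real.pi_ne_zero]))))) ∘L
    (fourierTransformCLM ℂ) ∘L
    (compCLMOfContinuousLinearEquiv ℂ (PiLp.continuousLinearEquiv 2 ℝ (fun _ : Fin d => ℝ)))

theorem fourierPhi_apply {d : ℕ} (ψ : SchwartzMap (Fin d → ℝ) V) (k : Fin d → ℝ) :
    fourierPhi d V ψ k = ∫ y, Complex.exp (Complex.I * (dotR k y : ℂ)) • ψ y := by
  rw [← (PiLp.volume_preserving_ofLp (Fin d)).integral_comp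
    (MeasurableEquiv.toLp 2 (Fin d → ℝ)).symm.measurableEmbedding]
  simp only [fourierPhi, ContinuousLinearMap.comp_apply,
    SchwartzMap.compCLMOfContinuousLinearEquiv_apply, SchwartzMap.fourierTransformCLM_apply,
    Function.comp_apply, SchwartzMap.fourier_coe, Real.fourier_eq']
  refine integral_congr_ae (Filter.Eventually.of_forall fun v => ?_)
  have : (-2 * π * inner ℝ v (-(2 * π)⁻¹ • (WithLp.toLp 2 k : EuclideanSpace ℝ (Fin d))) : ℝ)
      = dotR k (WithLp.ofLp v) := by
    rw [inner_smul_right]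
    simp only [dotR, PiLp.inner_apply, RCLike.inner_apply, conj_trivial]
    field_simp
  simp only
  rw [← this, mul_comm Complex.I]
  rfl

/-! ### Differentiation of oscillatory integrals -/

/-- `⟨k, ·⟩` as a continuous linear form. -/
def dotCLM {d : ℕ} (k : Fin d → ℝ) : (Fin d → ℝ) →L[ℝ] ℝ :=
  ∑ i, k i • ContinuousLinearMap.proj i

theorem dotCLM_apply {d : ℕ} (k x : Fin d → ℝ) : dotCLM k x = dotR k x := by
  simp [dotCLM, dotR]

theorem dotR_comm {d : ℕ} (k x : Fin d → ℝ) : dotR k x = dotR x k := by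
  simp [dotR, mul_comm]

theorem dotR_single {d : ℕ} (k : Fin d → ℝ) (μ : Fin d) : dotR k (Pi.single μ 1) = k μ := by
  simp [dotR, Pi.single_apply]

theorem continuous_dotCLM {d : ℕ} : Continuous (dotCLM : (Fin d → ℝ) → _) := by
  unfold dotCLM
  fun_prop

theorem norm_dotCLM_le {d : ℕ} (k : Fin d → ℝ) : ‖dotCLM k‖ ≤ d * ‖k‖ := by
  refine ContinuousLinearMap.opNorm_le_bound _ (by positivity) fun x => ?_
  rw [dotCLM_apply, dotR]
  calc ‖∑ i, k i * x i‖ ≤ ∑ i : Fin d, ‖k‖ * ‖x‖ := by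
        refine (norm_sum_le _ _).trans (Finset.sum_le_sum fun i _ => ?_)
        rw [norm_mul]
        exact mul_le_mul (norm_le_pi_norm k i) (norm_le_pi_norm x i) (norm_nonneg _)
          (norm_nonneg _)
    _ = d * ‖k‖ * ‖x‖ := by simp [mul_assoc]

theorem norm_phase (c t : ℝ) : ‖Complex.exp (Complex.I * ((c * t : ℝ) : ℂ))‖ = 1 := by
  rw [mul_comm]; exact Complex.norm_exp_ofReal_mul_I _

/-- The derivative in `x` of the integrand `(f(x + A k) e^{i c ⟨k,x⟩}) φ(k)`. -/
def oscDeriv {d : ℕ} (A : (Fin d → ℝ) →L[ℝ] (Fin d → ℝ)) (c : ℝ) (f : (Fin d → ℝ) → ℂ)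
    (φ : (Fin d → ℝ) → V) (x k : Fin d → ℝ) : (Fin d → ℝ) →L[ℝ] V :=
  (f (x + A k) • (Complex.exp (Complex.I * ((c * dotR k x : ℝ) : ℂ)) •
      (Complex.I • Complex.ofRealCLM ∘L (c • dotCLM k))) +
    Complex.exp (Complex.I * ((c * dotR k x : ℝ) : ℂ)) • fderiv ℝ f (x + A k)).smulRight (φ k)

theorem hasFDerivAt_phase {d : ℕ} (c : ℝ) (k x : Fin d → ℝ) :
    HasFDerivAt (fun x => Complex.exp (Complex.I * ((c * dotR k x : ℝ) : ℂ)))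
      (Complex.exp (Complex.I * ((c * dotR k x : ℝ) : ℂ)) •
      (Complex.I • Complex.ofRealCLM ∘L (c • dotCLM k))) x := by
  have h : HasFDerivAt (fun x => ((c * dotR k x : ℝ) : ℂ)) (Complex.ofRealCLM ∘L (c • dotCLM k))
      x := by
    have := (Complex.ofRealCLM ∘L (c • dotCLM k)).hasFDerivAt (x := x)
    refine this.congr_of_eventuallyEq (Filter.Eventually.of_forall fun y => ?_)
    simp [dotCLM_apply]
  exact (h.const_mul Complex.I).cexp

/-- Differentiation under the integral sign; the derivative of the integrand is dominated by
`(C₀ |c| d ‖k‖ + C₁) ‖φ k‖`, integrable because `φ` is Schwartz. With `f = 1`, `A = 0`, `c = 1` it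
differentiates the Fourier transform, with `A = ½Θ`, `c = -1` the Moyal product. -/
theorem hasFDerivAt_osc {d : ℕ} (A : (Fin d → ℝ) →L[ℝ] (Fin d → ℝ)) (c : ℝ)
    {f : (Fin d → ℝ) → ℂ} (hf : ContDiff ℝ 1 f) {C₀ C₁ : ℝ} (h₀ : ∀ x, ‖f x‖ ≤ C₀)
    (h₁ : ∀ x, ‖fderiv ℝ f x‖ ≤ C₁) (φ : SchwartzMap (Fin d → ℝ) V) (x : Fin d → ℝ) :
    HasFDerivAt
      (fun x => ∫ k, (f (x + A k) * Complex.exp (Complex.I * ((c * dotR k x : ℝ) : ℂ))) • φ k)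
      (∫ k, oscDeriv A c f φ x k) x ∧ Integrable (oscDeriv A c f φ x) := by
  have hC₀ : 0 ≤ C₀ := (norm_nonneg _).trans (h₀ 0)
  have hdot : ∀ x : Fin d → ℝ, Continuous fun k => dotR k x := fun x => by
    unfold dotR; fun_prop
  have hphase : ∀ x : Fin d → ℝ,
      Continuous fun k => Complex.exp (Complex.I * ((c * dotR k x : ℝ) : ℂ)) := fun x => by
    have := hdot x
    fun_prop
  have hfA : ∀ x : Fin d → ℝ, Continuous fun k => f (x + A k) := fun x => by
    have := hf.continuous
    fun_prop
  have hfA' : Continuous fun k => fderiv ℝ f (x + A k) := by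
    have := hf.continuous_fderiv one_ne_zero
    fun_prop
  have hF : ∀ x : Fin d → ℝ, Continuous fun k =>
      (f (x + A k) * Complex.exp (Complex.I * ((c * dotR k x : ℝ) : ℂ))) • φ k := fun x =>
    ((hfA x).mul (hphase x)).smul φ.continuous
  have hF' : Continuous (oscDeriv A c f φ x) := by
    have := hphase x
    have := hfA x
    have := continuous_dotCLM (d := d)
    have := φ.continuous
    rw [continuous_clm_apply]
    intro v
    simp only [oscDeriv, ContinuousLinearMap.smulRight_apply]
    fun_prop
  set bound : (Fin d → ℝ) → ℝ := fun k => (C₀ * |c| * d) * (‖k‖ ^ 1 * ‖φ k‖) +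
    C₁ * (‖k‖ ^ 0 * ‖φ k‖) with hbound
  have hint : Integrable bound :=
    ((φ.integrable_pow_mul volume 1).const_mul _).add
      ((φ.integrable_pow_mul volume 0).const_mul _)
  have hle : ∀ x k, ‖oscDeriv A c f φ x k‖ ≤ bound k := fun x k => by
    have e1 : ‖Complex.I • Complex.ofRealCLM ∘L (c • dotCLM k)‖ ≤ |c| * (d * ‖k‖) := by
      rw [norm_smul, Complex.norm_I, one_mul]
      refine (ContinuousLinearMap.opNorm_comp_le _ _).trans ?_
      rw [Complex.ofRealCLM_norm, one_mul, norm_smul, Real.norm_eq_abs]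
      exact mul_le_mul_of_nonneg_left (norm_dotCLM_le k) (abs_nonneg c)
    have e2 : ‖f (x + A k) • (Complex.exp (Complex.I * ((c * dotR k x : ℝ) : ℂ)) •
      (Complex.I • Complex.ofRealCLM ∘L (c • dotCLM k))) +
      Complex.exp (Complex.I * ((c * dotR k x : ℝ) : ℂ)) • fderiv ℝ f (x + A k)‖
        ≤ C₀ * (|c| * (d * ‖k‖)) + C₁ := by
      refine (norm_add_le _ _).trans ?_
      rw [norm_smul, norm_smul, norm_smul (Complex.exp _), norm_phase, one_mul, one_mul]
      exact add_le_add (mul_le_mul (h₀ _) e1 (norm_nonneg _) hC₀) (h₁ _)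
    have e3 : bound k = (C₀ * (|c| * (d * ‖k‖)) + C₁) * ‖φ k‖ := by rw [hbound]; ring
    refine ContinuousLinearMap.opNorm_le_bound _
      (e3 ▸ mul_nonneg ((norm_nonneg _).trans e2) (norm_nonneg _)) fun v => ?_
    rw [oscDeriv, ContinuousLinearMap.smulRight_apply, norm_smul, e3, mul_right_comm]
    exact mul_le_mul_of_nonneg_right ((ContinuousLinearMap.le_opNorm _ v).trans
      (mul_le_mul_of_nonneg_right e2 (norm_nonneg _))) (norm_nonneg _)
  refine ⟨?_, hint.mono' hF'.aestronglyMeasurable (Filter.Eventually.of_forall (hle x))⟩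
  refine hasFDerivAt_integral_of_dominated_of_fderiv_le (s := Set.univ) Filter.univ_mem
    (Filter.Eventually.of_forall fun x => (hF x).aestronglyMeasurable) ?_
    hF'.aestronglyMeasurable (Filter.Eventually.of_forall fun k x _ => hle x k) hint
    (Filter.Eventually.of_forall fun k x _ => ?_)
  · refine (φ.integrable.norm.const_mul C₀).mono' (hF x).aestronglyMeasurable
      (Filter.Eventually.of_forall fun k => ?_)
    rw [norm_smul, norm_mul, norm_phase, mul_one]
    exact mul_le_mul_of_nonneg_right (h₀ _) (norm_nonneg _)
  · have hfd : HasFDerivAt (fun x => f (x + A k)) (fderiv ℝ f (x + A k)) x := by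
      rw [hasFDerivAt_comp_add_right]
      exact (hf.differentiable one_ne_zero _).hasFDerivAt
    exact (hfd.mul (hasFDerivAt_phase c k x)).smul_const (φ k)

theorem integral_oscDeriv_apply {d : ℕ} (A : (Fin d → ℝ) →L[ℝ] (Fin d → ℝ)) (c : ℝ)
    (f : (Fin d → ℝ) → ℂ) (φ : (Fin d → ℝ) → V) (x v : Fin d → ℝ) [CompleteSpace V]
    (h : Integrable (oscDeriv A c f φ x)) :
    (∫ k, oscDeriv A c f φ x k) v =
      ∫ k, (f (x + A k) * Complex.exp (Complex.I * ((c * dotR k x : ℝ) : ℂ)) *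
          (Complex.I * ((c * dotR k v : ℝ) : ℂ)) +
        fderiv ℝ f (x + A k) v * Complex.exp (Complex.I * ((c * dotR k x : ℝ) : ℂ))) • φ k := by
  rw [ContinuousLinearMap.integral_apply h]
  congr 1
  ext k
  simp only [oscDeriv, ContinuousLinearMap.smulRight_apply, _root_.add_apply,
    _root_.smul_apply, ContinuousLinearMap.comp_apply, smul_eq_mul,
    Complex.ofRealCLM_apply, dotCLM_apply]
  congr 1
  ring

/-! ### Derivatives and coordinates under the Fourier transform -/

/-- Multiplication of a Schwartz function by the coordinate `x_μ`. -/
def coordMul {d : ℕ} (μ : Fin d) : SchwartzMap (Fin d → ℝ) V →L[ℂ] SchwartzMap (Fin d → ℝ) V :=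
  SchwartzMap.smulLeftCLM V (fun x : Fin d → ℝ => (x μ : ℂ))

theorem coordMul_apply {d : ℕ} (μ : Fin d) (ψ : SchwartzMap (Fin d → ℝ) V) (x : Fin d → ℝ) :
    coordMul μ ψ x = x μ • ψ x := by
  have : (fun x : Fin d → ℝ => (x μ : ℂ)).HasTemperateGrowth :=
    (Complex.ofRealCLM ∘L
      ContinuousLinearMap.proj (R := ℝ) (φ := fun _ : Fin d => ℝ) μ).hasTemperateGrowth
  rw [coordMul, SchwartzMap.smulLeftCLM_apply_apply this, Complex.coe_smul]

/-- The partial derivative `∂_μ` on Schwartz functions. -/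
def pderS {d : ℕ} (μ : Fin d) : SchwartzMap (Fin d → ℝ) V →L[ℂ] SchwartzMap (Fin d → ℝ) V :=
  LineDeriv.lineDerivOpCLM ℂ _ (Pi.single μ 1 : Fin d → ℝ)

theorem pderS_apply {d : ℕ} (μ : Fin d) (ψ : SchwartzMap (Fin d → ℝ) V) (x : Fin d → ℝ) :
    pderS μ ψ x = fderiv ℝ ψ x (Pi.single μ 1) :=
  SchwartzMap.lineDerivOp_apply_eq_fderiv _ _ _

theorem schwartz_bounds {d : ℕ} (f : SchwartzMap (Fin d → ℝ) V) :
    (∃ C, ∀ x, ‖f x‖ ≤ C) ∧ ∃ C, ∀ x, ‖fderiv ℝ f x‖ ≤ C := by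
  refine ⟨⟨_, f.norm_le_seminorm ℝ⟩,
    ⟨SchwartzMap.seminorm ℝ 0 0 (SchwartzMap.fderivCLM ℝ (Fin d → ℝ) V f), fun x => ?_⟩⟩
  rw [← SchwartzMap.fderivCLM_apply ℝ]
  exact SchwartzMap.norm_le_seminorm ℝ _ x

theorem fderiv_fourierPhi {d : ℕ} [CompleteSpace V] (ψ : SchwartzMap (Fin d → ℝ) V)
    (μ : Fin d) (k : Fin d → ℝ) :
    fderiv ℝ (fourierPhi d V ψ) k (Pi.single μ 1) =
      Complex.I • fourierPhi d V (coordMul μ ψ) k := by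
  obtain ⟨h, hi⟩ := hasFDerivAt_osc (V := V) (0 : (Fin d → ℝ) →L[ℝ] (Fin d → ℝ)) 1
    (f := fun _ => (1 : ℂ)) contDiff_const (C₀ := 1) (C₁ := 0) (by simp) (by simp) ψ k
  have e : (fourierPhi d V ψ : (Fin d → ℝ) → V) = fun x => ∫ k,
      ((1 : ℂ) * Complex.exp (Complex.I * ((1 * dotR k x : ℝ) : ℂ))) • ψ k := by
    ext x
    simp only [fourierPhi_apply, one_mul, dotR_comm x]
  rw [e, h.fderiv, integral_oscDeriv_apply _ _ _ _ _ _ hi, fourierPhi_apply, ← integral_smul]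
  congr 1
  ext y
  simp only [coordMul_apply, dotR_single, dotR_comm k, one_mul, fderiv_fun_const, Pi.zero_apply,
    _root_.zero_apply, zero_mul, add_zero]
  rw [← Complex.coe_smul (y μ), smul_smul, smul_smul]
  congr 1
  ring

theorem fourierPhi_pderS {d : ℕ} [CompleteSpace V] (ψ : SchwartzMap (Fin d → ℝ) V)
    (μ : Fin d) (k : Fin d → ℝ) :
    fourierPhi d V (pderS μ ψ) k = -(Complex.I * (k μ : ℂ)) • fourierPhi d V ψ k := by
  have hd : ∀ y, HasFDerivAt (fun y => Complex.exp (Complex.I * (dotR k y : ℂ)))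
      (Complex.exp (Complex.I * (dotR k y : ℂ)) •
        (Complex.I • Complex.ofRealCLM ∘L dotCLM k)) y := fun y => by
    simpa using hasFDerivAt_phase 1 k y
  have hv : ∀ y, fderiv ℝ (fun y => Complex.exp (Complex.I * (dotR k y : ℂ))) y (Pi.single μ 1)
      = Complex.I * (k μ : ℂ) * Complex.exp (Complex.I * (dotR k y : ℂ)) := fun y => by
    rw [(hd y).fderiv]
    simp [dotCLM_apply, dotR_single]
    ring
  have hint : ∀ χ : SchwartzMap (Fin d → ℝ) V,
      Integrable fun y => Complex.exp (Complex.I * (dotR k y : ℂ)) • χ y := fun χ => by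
    have hc : Continuous fun y => Complex.exp (Complex.I * (dotR k y : ℂ)) :=
      continuous_iff_continuousAt.2 fun y => (hd y).continuousAt
    refine χ.integrable.norm.mono' (hc.smul χ.continuous).aestronglyMeasurable
      (Filter.Eventually.of_forall fun y => ?_)
    have := norm_phase 1 (dotR k y)
    rw [one_mul] at this
    rw [norm_smul, this, one_mul]
  have key := integral_smul_fderiv_eq_neg_fderiv_smul_of_integrable (μ := volume) (𝕜 := ℂ)
    (f := fun y => Complex.exp (Complex.I * (dotR k y : ℂ))) (g := ψ)
    (v := (Pi.single μ 1 : Fin d → ℝ))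
    (by simp only [hv, mul_smul _ (Complex.exp _)]; exact (hint ψ).smul (Complex.I * (k μ : ℂ)))
    (by simpa only [pderS_apply] using hint (pderS μ ψ)) (hint ψ)
    (fun y _ => (hd y).differentiableAt) (fun y _ => ψ.differentiableAt)
  simp only [fourierPhi_apply, pderS_apply, key, hv, mul_smul, integral_smul, neg_smul]

/-! ### The Moyal product as an oscillatory integral -/

/-- The linear map `k ↦ ½Θk`. -/
def halfTheta {d : ℕ} (Θ : Matrix (Fin d) (Fin d) ℝ) : (Fin d → ℝ) →L[ℝ] (Fin d → ℝ) :=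
  (2 : ℝ)⁻¹ • LinearMap.toContinuousLinearMap Θ.mulVecLin

theorem halfTheta_apply {d : ℕ} (Θ : Matrix (Fin d) (Fin d) ℝ) (k : Fin d → ℝ) :
    halfTheta Θ k = (2 : ℝ)⁻¹ • Θ.mulVec k := by
  simp [halfTheta]

/-- The Moyal product as a single oscillatory integral against the Fourier transform of `ψ`. -/
theorem moyalV_eq {d : ℕ} (Θ : Matrix (Fin d) (Fin d) ℝ) (f : (Fin d → ℝ) → ℂ)
    (ψ : SchwartzMap (Fin d → ℝ) V) (x : Fin d → ℝ) :
    moyalV Θ f ψ x = ((2 * π) ^ d : ℝ)⁻¹ • ∫ k : Fin d → ℝ,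
      (f (x + halfTheta Θ k) * Complex.exp (Complex.I * (((-1) * dotR k x : ℝ) : ℂ))) •
        fourierPhi d V ψ k := by
  rw [moyalV]
  congr 2
  ext k
  rw [fourierPhi_apply, ← integral_add_left_eq_self (μ := volume)
    (fun y => Complex.exp (Complex.I * (dotR k y : ℂ)) • ψ y) x, ← integral_smul]
  congr 1
  ext y
  rw [smul_smul, halfTheta_apply]
  congr 1
  have : dotR k (x + y) = dotR k x + dotR k y := by
    simp [dotR, mul_add, Finset.sum_add_distrib]
  rw [mul_assoc, ← Complex.exp_add, this]
  congr 2
  push_cast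
  ring

theorem integrable_moyal {d : ℕ} (Θ : Matrix (Fin d) (Fin d) ℝ) (f : SchwartzMap (Fin d → ℝ) ℂ)
    (φ : SchwartzMap (Fin d → ℝ) V) (x : Fin d → ℝ) :
    Integrable fun k : Fin d → ℝ =>
      (f (x + halfTheta Θ k) * Complex.exp (Complex.I * (((-1) * dotR k x : ℝ) : ℂ))) • φ k := by
  obtain ⟨C, hC⟩ := (schwartz_bounds f).1
  have hc : Continuous fun k : Fin d → ℝ =>
      (f (x + halfTheta Θ k) * Complex.exp (Complex.I * (((-1) * dotR k x : ℝ) : ℂ))) • φ k := by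
    have := f.continuous
    have := φ.continuous
    unfold dotR
    fun_prop
  refine (φ.integrable.norm.const_mul C).mono' hc.aestronglyMeasurable
    (Filter.Eventually.of_forall fun k => ?_)
  rw [norm_smul, norm_mul, norm_phase, mul_one]
  exact mul_le_mul_of_nonneg_right (hC _) (norm_nonneg _)

theorem moyalV_add {d : ℕ} (Θ : Matrix (Fin d) (Fin d) ℝ) (f : SchwartzMap (Fin d → ℝ) ℂ)
    (ψ χ : SchwartzMap (Fin d → ℝ) V) (x : Fin d → ℝ) :
    moyalV Θ f (ψ + χ) x = moyalV Θ f ψ x + moyalV Θ f χ x := by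
  simp only [moyalV_eq, map_add, _root_.add_apply, smul_add]
  rw [integral_add (integrable_moyal Θ f _ x) (integrable_moyal Θ f _ x), smul_add]

/-- The Moyal product with `f` on the left, evaluated at `x`, as a linear functional of the right
factor. -/
def moyalL {d : ℕ} (Θ : Matrix (Fin d) (Fin d) ℝ) (f : SchwartzMap (Fin d → ℝ) ℂ)
    (x : Fin d → ℝ) : SchwartzMap (Fin d → ℝ) V →ₗ[ℂ] V where
  toFun ψ := moyalV Θ f ψ x
  map_add' ψ χ := moyalV_add Θ f ψ χ x
  map_smul' c ψ := by
    simp only [moyalV_eq, map_smul, _root_.smul_apply, RingHom.id_apply]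
    rw [smul_comm c, ← integral_smul c]
    simp only [smul_comm c]

theorem moyalL_apply {d : ℕ} (Θ : Matrix (Fin d) (Fin d) ℝ) (f : SchwartzMap (Fin d → ℝ) ℂ)
    (x : Fin d → ℝ) (ψ : SchwartzMap (Fin d → ℝ) V) : moyalL Θ f x ψ = moyalV Θ f ψ x := rfl

theorem moyalL_postcomp {d : ℕ} [CompleteSpace V] (Θ : Matrix (Fin d) (Fin d) ℝ)
    (f : SchwartzMap (Fin d → ℝ) ℂ) (x : Fin d → ℝ) (L : V →L[ℂ] V)
    (ψ : SchwartzMap (Fin d → ℝ) V) :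
    moyalL Θ f x (ψ.postcompCLM L) = L (moyalL Θ f x ψ) := by
  have hΦ : ∀ k, fourierPhi d V (ψ.postcompCLM L) k = L (fourierPhi d V ψ k) := fun k => by
    rw [fourierPhi_apply, fourierPhi_apply, ← ContinuousLinearMap.integral_comp_comm]
    · simp only [SchwartzMap.postcompCLM_apply, map_smul]
    · have hc : Continuous fun y => Complex.exp (Complex.I * (dotR k y : ℂ)) • ψ y := by
        have := ψ.continuous
        unfold dotR
        fun_prop
      refine ψ.integrable.norm.mono' hc.aestronglyMeasurable
        (Filter.Eventually.of_forall fun y => ?_)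
      have := norm_phase 1 (dotR k y)
      rw [one_mul] at this
      rw [norm_smul, this, one_mul]
  simp only [moyalL_apply, moyalV_eq, hΦ]
  rw [← Complex.coe_smul, ← Complex.coe_smul, map_smul,
    ← ContinuousLinearMap.integral_comp_comm L (integrable_moyal Θ f _ x)]
  simp only [map_smul]

/-! ### Commutation with derivatives and coordinates -/

/-- Leibniz rule for the Moyal product. -/
theorem pderV_moyalV {d : ℕ} [CompleteSpace V] (Θ : Matrix (Fin d) (Fin d) ℝ)
    (f : SchwartzMap (Fin d → ℝ) ℂ) (ψ : SchwartzMap (Fin d → ℝ) V) (x : Fin d → ℝ) (μ : Fin d) :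
    pderV μ (moyalV Θ f ψ) x =
      moyalL Θ (pderS μ f) x ψ + moyalL Θ f x (pderS μ ψ) := by
  obtain ⟨⟨C₀, h₀⟩, C₁, h₁⟩ := schwartz_bounds f
  obtain ⟨h, hi⟩ := hasFDerivAt_osc (halfTheta Θ) (-1) (f.smooth 1) h₀ h₁ (fourierPhi d V ψ) x
  have e : moyalV Θ f ψ = fun x => ((2 * π) ^ d : ℝ)⁻¹ • ∫ k : Fin d → ℝ,
      (f (x + halfTheta Θ k) * Complex.exp (Complex.I * (((-1) * dotR k x : ℝ) : ℂ))) •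
        fourierPhi d V ψ k := by
    ext x
    exact moyalV_eq Θ f ψ x
  rw [pderV, e, (h.fun_const_smul _).fderiv, _root_.smul_apply,
    integral_oscDeriv_apply _ _ _ _ _ _ hi, moyalL_apply, moyalL_apply, moyalV_eq, moyalV_eq,
    ← smul_add, ← integral_add (integrable_moyal Θ _ _ x) (integrable_moyal Θ _ _ x)]
  congr 2
  ext k
  rw [fourierPhi_pderS, smul_smul, ← add_smul, pderS_apply, dotR_single]
  congr 1
  push_cast
  ring

/-- Multiplying the right factor by `x_μ` amounts to a `k`-derivative of the Fourier transform of
`ψ`; integration by parts moves it to `f(x + ½Θk) e^{-i⟨k,x⟩}`. -/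
theorem moyalL_coordMul {d : ℕ} [CompleteSpace V] (Θ : Matrix (Fin d) (Fin d) ℝ)
    (f : SchwartzMap (Fin d → ℝ) ℂ) (ψ : SchwartzMap (Fin d → ℝ) V) (x : Fin d → ℝ) (μ : Fin d) :
    moyalL Θ f x (coordMul μ ψ) = (x μ : ℂ) • moyalL Θ f x ψ +
      ∑ ν, (Complex.I * ((Θ ν μ / 2 : ℝ) : ℂ)) • moyalL Θ (pderS ν f) x ψ := by
  set E : (Fin d → ℝ) → ℂ := fun k => Complex.exp (Complex.I * (((-1) * dotR k x : ℝ) : ℂ))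
    with hE
  have hE' : ∀ k, HasFDerivAt E
      (E k • (Complex.I • Complex.ofRealCLM ∘L ((-1 : ℝ) • dotCLM x))) k := fun k => by
    have := hasFDerivAt_phase (-1) x k
    simpa only [hE, dotR_comm _ x] using this
  have hf' : ∀ k, HasFDerivAt (fun k => f (x + halfTheta Θ k))
      (fderiv ℝ f (x + halfTheta Θ k) ∘L halfTheta Θ) k := fun k =>
    (f.hasFDerivAt _).comp k ((halfTheta Θ).hasFDerivAt.const_add x)
  have hu := fun k => (hf' k).fun_mul (hE' k)
  have hsingle : halfTheta Θ (Pi.single μ 1) = ∑ ν, (Θ ν μ / 2) • (Pi.single ν 1 : Fin d → ℝ) := by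
    ext i
    simp [halfTheta_apply, Finset.sum_apply, Pi.single_apply]
    ring
  have hval : ∀ k, fderiv ℝ (fun k => f (x + halfTheta Θ k) * E k) k (Pi.single μ 1) =
      ∑ ν, ((Θ ν μ / 2 : ℝ) : ℂ) * (pderS ν f (x + halfTheta Θ k) * E k) +
        (-Complex.I * (x μ : ℂ)) * (f (x + halfTheta Θ k) * E k) := fun k => by
    rw [(hu k).fderiv]
    simp only [_root_.add_apply, _root_.smul_apply, ContinuousLinearMap.comp_apply, hsingle,
      map_sum, map_smul, pderS_apply, dotCLM_apply, dotR_single, Complex.ofRealCLM_apply,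
      smul_eq_mul, Complex.real_smul, Finset.mul_sum]
    rw [add_comm]
    congr 1
    · exact Finset.sum_congr rfl fun ν _ => by ring
    · push_cast
      ring
  have hJ : ∀ (g : SchwartzMap (Fin d → ℝ) ℂ) (φ : SchwartzMap (Fin d → ℝ) V),
    Integrable fun k : Fin d → ℝ => (g (x + halfTheta Θ k) * E k) • φ k := fun g φ =>
      integrable_moyal Θ g φ x
  have hval' : ∀ k, fderiv ℝ (fun k => f (x + halfTheta Θ k) * E k) k (Pi.single μ 1) •
      fourierPhi d V ψ k =
      ∑ ν, ((Θ ν μ / 2 : ℝ) : ℂ) • ((pderS ν f (x + halfTheta Θ k) * E k) • fourierPhi d V ψ k) +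
        (-Complex.I * (x μ : ℂ)) • ((f (x + halfTheta Θ k) * E k) • fourierPhi d V ψ k) := by
    intro k
    rw [hval, add_smul, Finset.sum_smul]
    simp only [mul_smul]
  have hs : ∀ ν, Integrable fun k : Fin d → ℝ => ((Θ ν μ / 2 : ℝ) : ℂ) •
      ((pderS ν f (x + halfTheta Θ k) * E k) • fourierPhi d V ψ k) := fun ν =>
    (hJ (pderS ν f) _).smul _
  have hsum := integrable_finsetSum Finset.univ fun ν _ => hs ν
  have hx : Integrable fun k : Fin d → ℝ => (-Complex.I * (x μ : ℂ)) •
      ((f (x + halfTheta Θ k) * E k) • fourierPhi d V ψ k) := (hJ f _).smul _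
  have hcomm : ∀ k, (f (x + halfTheta Θ k) * E k) •
      fderiv ℝ (fourierPhi d V ψ) k (Pi.single μ 1) =
      Complex.I • ((f (x + halfTheta Θ k) * E k) • fourierPhi d V (coordMul μ ψ) k) := fun k => by
    rw [fderiv_fourierPhi, smul_comm]
  have key := integral_smul_fderiv_eq_neg_fderiv_smul_of_integrable (μ := volume) (𝕜 := ℂ)
    (f := fun k => f (x + halfTheta Θ k) * E k) (g := fourierPhi d V ψ)
    (v := (Pi.single μ 1 : Fin d → ℝ))
    (by simp only [hval']; exact hsum.add hx)
    (by simp only [hcomm]; exact (hJ f _).smul _) (hJ f _)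
    (fun y _ => (hu y).differentiableAt) (fun y _ => (fourierPhi d V ψ).differentiableAt)
  simp only [hcomm, hval'] at key
  rw [integral_add hsum hx, integral_finsetSum _ fun ν _ => hs ν, integral_smul, integral_smul]
    at key
  simp only [integral_smul] at key
  -- Multiplying the integrated identity by `-i` isolates the wanted integral.
  have key2 := congrArg (fun v => (-Complex.I) • v) key
  simp only [smul_smul, smul_neg, smul_add, Finset.smul_sum, neg_mul, Complex.I_mul_I, neg_neg,
    one_smul, neg_smul, ← mul_assoc, neg_add_rev, one_mul, Finset.sum_neg_distrib] at key2
  simp only [moyalL_apply, moyalV_eq]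
  rw [key2, smul_add, Finset.smul_sum, smul_comm _ (x μ : ℂ)]
  congr 1
  exact Finset.sum_congr rfl fun ν _ => smul_comm _ _ _

/-! ### The commutators with the Dirac operators -/

/-- `a_μ` as a map into Schwartz functions. -/
def annS {d : ℕ} (Ω : ℝ) (μ : Fin d) (ψ : SchwartzMap (Fin d → ℝ) V) :
    SchwartzMap (Fin d → ℝ) V :=
  pderS μ ψ + (Ω : ℂ) • coordMul μ ψ

/-- `a_μ†` as a map into Schwartz functions. -/
def creS {d : ℕ} (Ω : ℝ) (μ : Fin d) (ψ : SchwartzMap (Fin d → ℝ) V) :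
    SchwartzMap (Fin d → ℝ) V :=
  -pderS μ ψ + (Ω : ℂ) • coordMul μ ψ

theorem annS_apply {d : ℕ} (Ω : ℝ) (μ : Fin d) (ψ : SchwartzMap (Fin d → ℝ) V)
    (x : Fin d → ℝ) : annS Ω μ ψ x = annOp Ω μ ψ x := by
  simp [annS, annOp, pderV, pderS_apply, coordMul_apply, mul_smul]

theorem creS_apply {d : ℕ} (Ω : ℝ) (μ : Fin d) (ψ : SchwartzMap (Fin d → ℝ) V)
    (x : Fin d → ℝ) : creS Ω μ ψ x = creOp Ω μ ψ x := by
  simp [creS, creOp, pderV, pderS_apply, coordMul_apply, mul_smul]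

/-- Reorganises the double sum over `Θ` produced by the terms `Ω̃ x_μ` into the `Θ`-part of the
matrices `Γ`. -/
theorem sum_theta_swap {d : ℕ} (Θ : Matrix (Fin d) (Fin d) ℝ) (Ω : ℝ) (L : Fin d → V →L[ℂ] V)
    (A : Fin d → V) :
    ∑ μ, (Ω : ℂ) • L μ (∑ ν, (Complex.I * ((Θ ν μ / 2 : ℝ) : ℂ)) • A ν) =
      ∑ μ, (∑ ν, ((Ω / 2 * Θ μ ν : ℝ) : ℂ) • L ν) (Complex.I • A μ) := by
  simp only [map_sum, map_smul, Finset.smul_sum, _root_.sum_apply, _root_.smul_apply, smul_smul]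
  rw [Finset.sum_comm]
  refine Finset.sum_congr rfl fun μ _ => Finset.sum_congr rfl fun ν _ => ?_
  congr 1
  push_cast
  ring

/-- Commutators of the Dirac-type operators with left Moyal
multiplication: `D₁(f ⋆ ψ) − f ⋆ D₁ψ = Σ_μ Γ^μ ((i∂_μ f) ⋆ ψ)` and
`D₂(f ⋆ ψ) − f ⋆ D₂ψ = Σ_μ Γ^{μ+d} ((i∂_μ f) ⋆ ψ)`. -/
theorem dirac_moyal_commutator {d : ℕ} (hd : Even d) (hd2 : 2 ≤ d)
    (Θ : Matrix (Fin d) (Fin d) ℝ) (hskew : Θᵀ = -Θ) (hdet : Θ.det ≠ 0)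
    (Ω : ℝ) (hΩ : 0 < Ω)
    (V : Type*) [NormedAddCommGroup V] [InnerProductSpace ℂ V]
    [FiniteDimensional ℂ V]
    (b bs : Fin d → V →L[ℂ] V)
    (hadj : ∀ (μ : Fin d) (x y : V), ⟪bs μ x, y⟫_ℂ = ⟪x, b μ y⟫_ℂ)
    (hbb : ∀ μ ν : Fin d, b μ ∘L b ν + b ν ∘L b μ = 0)
    (hbbs : ∀ μ ν : Fin d, b μ ∘L bs ν + bs ν ∘L b μ
      = if μ = ν then (1 : V →L[ℂ] V) else 0)
    (f : SchwartzMap ((Fin d) → ℝ) ℂ) (ψ : SchwartzMap ((Fin d) → ℝ) V)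
    (x : Fin d → ℝ) :
    D1op Ω b bs (moyalV Θ ⇑f ⇑ψ) x - moyalV Θ ⇑f (D1op Ω b bs ⇑ψ) x
      = ∑ μ, GammaA Θ Ω b bs μ
          (moyalV Θ (fun y => Complex.I * fderiv ℝ ⇑f y (Pi.single μ 1)) ⇑ψ x) ∧
    D2op Ω b bs (moyalV Θ ⇑f ⇑ψ) x - moyalV Θ ⇑f (D2op Ω b bs ⇑ψ) x
      = ∑ μ, GammaB Θ Ω b bs μ
          (moyalV Θ (fun y => Complex.I * fderiv ℝ ⇑f y (Pi.single μ 1)) ⇑ψ x) := by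
  have : CompleteSpace V := FiniteDimensional.complete ℂ V
  have hI : ∀ μ, moyalV Θ (fun y => Complex.I * fderiv ℝ ⇑f y (Pi.single μ 1)) ⇑ψ x
      = Complex.I • moyalL Θ (pderS μ f) x ψ := fun μ => by
    rw [moyalL_apply, moyalV_eq, moyalV_eq, smul_comm Complex.I, ← integral_smul Complex.I]
    simp only [pderS_apply, smul_smul, mul_assoc]
  -- `moyalL` is linear on Schwartz functions only, so `D₁ψ` is first written as one.
  have hD1 : moyalV Θ f (D1op Ω b bs ψ) x =
      ∑ μ, (bs μ (moyalL Θ f x (annS Ω μ ψ)) + b μ (moyalL Θ f x (creS Ω μ ψ))) := by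
    have : D1op Ω b bs ψ = ⇑(∑ μ, ((annS Ω μ ψ).postcompCLM (bs μ) +
        (creS Ω μ ψ).postcompCLM (b μ))) := by
      ext y
      simp [D1op, annS_apply, creS_apply]
    rw [this, ← moyalL_apply, map_sum]
    simp only [map_add, moyalL_postcomp]
  have hD2 : moyalV Θ f (D2op Ω b bs ψ) x =
      ∑ μ, (Complex.I • b μ (moyalL Θ f x (annS Ω μ ψ)) -
        Complex.I • bs μ (moyalL Θ f x (creS Ω μ ψ))) := by
    have : D2op Ω b bs ψ = ⇑(∑ μ, (Complex.I • (annS Ω μ ψ).postcompCLM (b μ) -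
        Complex.I • (creS Ω μ ψ).postcompCLM (bs μ))) := by
      ext y
      simp [D2op, annS_apply, creS_apply]
    rw [this, ← moyalL_apply, map_sum]
    simp only [map_sub, map_smul, moyalL_postcomp]
  have hann : ∀ μ, annOp Ω μ (moyalV Θ f ψ) x = moyalL Θ f x (annS Ω μ ψ) +
      (moyalL Θ (pderS μ f) x ψ -
        (Ω : ℂ) • ∑ ν, (Complex.I * ((Θ ν μ / 2 : ℝ) : ℂ)) • moyalL Θ (pderS ν f) x ψ) := by
    intro μ
    rw [annOp, pderV_moyalV, annS, map_add, map_smul, moyalL_coordMul, ← moyalL_apply,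
      ← Complex.coe_smul]
    push_cast
    module
  have hcre : ∀ μ, creOp Ω μ (moyalV Θ f ψ) x = moyalL Θ f x (creS Ω μ ψ) +
      (-moyalL Θ (pderS μ f) x ψ -
        (Ω : ℂ) • ∑ ν, (Complex.I * ((Θ ν μ / 2 : ℝ) : ℂ)) • moyalL Θ (pderS ν f) x ψ) := by
    intro μ
    rw [creOp, pderV_moyalV, creS, map_add, map_neg, map_smul, moyalL_coordMul, ← moyalL_apply,
      ← Complex.coe_smul]
    push_cast
    module
  -- In both cases only the brackets added in `hann` and `hcre` survive the subtraction.
  constructor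
  · simp only [hI, GammaA, _root_.sub_apply]
    rw [Finset.sum_sub_distrib, ← sum_theta_swap Θ Ω (fun ν => b ν + bs ν)
      (fun μ => moyalL Θ (pderS μ f) x ψ), ← Finset.sum_sub_distrib, hD1, D1op,
      ← Finset.sum_sub_distrib]
    refine Finset.sum_congr rfl fun μ _ => ?_
    rw [hann, hcre]
    simp only [map_add, map_sub, map_neg, map_smul, _root_.add_apply, _root_.sub_apply,
      _root_.smul_apply, smul_smul, Complex.I_mul_I]
    module
  · simp only [hI, GammaB, _root_.sub_apply]
    rw [Finset.sum_sub_distrib, ← sum_theta_swap Θ Ω (fun ν => Complex.I • (b ν - bs ν))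
      (fun μ => moyalL Θ (pderS μ f) x ψ), ← Finset.sum_sub_distrib, hD2, D2op,
      ← Finset.sum_sub_distrib]
    refine Finset.sum_congr rfl fun μ _ => ?_
    rw [hann, hcre]
    simp only [map_add, map_sub, map_neg, map_smul, _root_.add_apply, _root_.sub_apply,
      _root_.smul_apply]
    module

end
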